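/- arXiv:2502.04146 — 2 statements merged into one kernel-verified Lean document; each statement's English description precedes it below -/
import Mathlib

section
/- Let (U, φ) be the closure space of a finite simple binary matroid, where φ is the matroid closure operator. Then the canonical (Duquenne–Guigues) base and the E-base of (U, φ) are equal; in particular, the E-base of (U, φ) is valid. -/
namespace EBaseFormal

open Set

variable {α : Type*}

/-- `φ` is a closure operator on subsets of `α`. -/
def IsClosureOp (φ : Set α → Set α) : Prop :=
  (∀ X, X ⊆ φ X) ∧ (∀ X, φ (φ X) = φ X) ∧ ∀ X Y : Set α, X ⊆ Y → φ X ⊆ φ Y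

/-- `C` is a closed set of the closure space. -/
def IsClosedSet (φ : Set α → Set α) (C : Set α) : Prop :=
  φ C = C

/-- The closure space is standard: `φ {x} \ {x}` is closed for every `x`. -/
def IsStandard (φ : Set α → Set α) : Prop :=
  ∀ x : α, IsClosedSet φ (φ {x} \ {x})

/-- The binary part `φ^b` of the closure operator. -/
def binPart (φ : Set α → Set α) (X : Set α) : Set α :=
  ⋃ x ∈ X, φ {x}

/-- `A` is a D-generator of `x`. -/
def IsDGen (φ : Set α → Set α) (x : α) (A : Set α) : Prop :=
  x ∈ φ A ∧ x ∉ binPart φ A ∧ ∀ B : Set α, binPart φ B ⊂ binPart φ A → x ∉ φ B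

/-- `A` is an E-generator of `x`: a D-generator whose closure is inclusion-minimal
among the closures of D-generators of `x`. -/
def IsEGen (φ : Set α → Set α) (x : α) (A : Set α) : Prop :=
  IsDGen φ x A ∧ ∀ B : Set α, IsDGen φ x B → φ B ⊆ φ A → φ B = φ A

/-- The E-base of the closure space: all valid nontrivial binary implications
together with the implications `A → {x}` for `A` an E-generator of `x`. -/
def EBase (φ : Set α → Set α) : Set (Set α × Set α) :=
  {p | ∃ a x : α, p = ({a}, {x}) ∧ x ∈ φ {a} ∧ x ≠ a} ∪
    {p | ∃ (x : α) (A : Set α), p = (A, {x}) ∧ IsEGen φ x A}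

/-- `Y` satisfies all implications of `S`. -/
def ImpClosedSet (S : Set (Set α × Set α)) (Y : Set α) : Prop :=
  ∀ p ∈ S, p.1 ⊆ Y → p.2 ⊆ Y

/-- The closure of `Z` under the implications in `S`: the smallest set containing
`Z` satisfying all implications of `S`. -/
def ImpClosure (S : Set (Set α × Set α)) (Z : Set α) : Set α :=
  ⋂₀ {Y : Set α | Z ⊆ Y ∧ ImpClosedSet S Y}

/-- The E-base is valid: its induced closure operator is `φ`. -/
def EBaseValid (φ : Set α → Set α) : Prop :=
  ∀ Z : Set α, ImpClosure (EBase φ) Z = φ Z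

/-- `Q` is quasi-closed. -/
def QuasiClosed (φ : Set α → Set α) (Q : Set α) : Prop :=
  ∀ X ⊆ Q, φ X ⊂ φ Q → φ X ⊆ Q

/-- `P` is pseudo-closed: non-closed and inclusion-minimal among the quasi-closed
sets spanning `φ P`. -/
def PseudoClosed (φ : Set α → Set α) (P : Set α) : Prop :=
  ¬ IsClosedSet φ P ∧ QuasiClosed φ P ∧
    ∀ Q : Set α, QuasiClosed φ Q → φ Q = φ P → Q ⊆ P → Q = P

/-- `C` is an essential closed set. -/
def Essential (φ : Set α → Set α) (C : Set α) : Prop :=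
  IsClosedSet φ C ∧ ∃ P : Set α, PseudoClosed φ P ∧ φ P = C

/-- The canonical (Duquenne–Guigues) base. -/
def DGBase (φ : Set α → Set α) : Set (Set α × Set α) :=
  {p | ∃ P : Set α, PseudoClosed φ P ∧ p = (P, φ P \ P)}

/-- `C'` is a predecessor (lower cover) of `C` in the closure lattice. -/
def Predecessor (φ : Set α → Set α) (C' C : Set α) : Prop :=
  IsClosedSet φ C' ∧ IsClosedSet φ C ∧ C' ⊂ C ∧
    ∀ C'' : Set α, IsClosedSet φ C'' → C' ⊂ C'' → C'' ⊆ C → C'' = C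

/-- The closure lattice is join-semidistributive. -/
def JoinSemidistrib (φ : Set α → Set α) : Prop :=
  ∀ C1 C2 C3 : Set α, IsClosedSet φ C1 → IsClosedSet φ C2 → IsClosedSet φ C3 →
    φ (C1 ∪ C2) = φ (C1 ∪ C3) → φ (C1 ∪ C2) = φ (C1 ∪ C2 ∩ C3)

/-- The closure lattice is meet-semidistributive. -/
def MeetSemidistrib (φ : Set α → Set α) : Prop :=
  ∀ C1 C2 C3 : Set α, IsClosedSet φ C1 → IsClosedSet φ C2 → IsClosedSet φ C3 →
    C1 ∩ C2 = C1 ∩ C3 → C1 ∩ C2 = C1 ∩ φ (C2 ∪ C3)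

/-- The closure lattice is semidistributive. -/
def Semidistrib (φ : Set α → Set α) : Prop :=
  JoinSemidistrib φ ∧ MeetSemidistrib φ

/-- The closure lattice is modular: `a ≤ b → (b ∧ c) ∨ a = b ∧ (c ∨ a)`. -/
def ModularLattice (φ : Set α → Set α) : Prop :=
  ∀ A B C : Set α, IsClosedSet φ A → IsClosedSet φ B → IsClosedSet φ C →
    A ⊆ B → φ (B ∩ C ∪ A) = B ∩ φ (C ∪ A)

/-- The closure lattice is atomistic (in a standard space). -/
def Atomistic (φ : Set α → Set α) : Prop :=
  ∀ x : α, φ {x} = ({x} : Set α)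

/-- The closure lattice is upper-semimodular. -/
def UpperSemimodular (φ : Set α → Set α) : Prop :=
  ∀ C1 C2 : Set α, IsClosedSet φ C1 → IsClosedSet φ C2 →
    Predecessor φ (C1 ∩ C2) C1 → Predecessor φ C2 (φ (C1 ∪ C2))

/-- The closure lattice is geometric: atomistic and upper-semimodular. -/
def Geometric (φ : Set α → Set α) : Prop :=
  Atomistic φ ∧ UpperSemimodular φ

/-- `x` is prime in the lattice `(↓C, ⊆)` of closed subsets of `C`. -/
def PrimeIn (φ : Set α → Set α) (C : Set α) (x : α) : Prop :=
  ∀ C1 C2 : Set α, IsClosedSet φ C1 → IsClosedSet φ C2 → C1 ⊆ C → C2 ⊆ C →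
    φ {x} ⊆ φ (C1 ∪ C2) → φ {x} ⊆ C1 ∨ φ {x} ⊆ C2

/-- `x ∈ C` is almost prime in `(↓C, ⊆)`. -/
def AlmostPrimeIn (φ : Set α → Set α) (C : Set α) (x : α) : Prop :=
  x ∈ C ∧ ¬ PrimeIn φ C x ∧
    ∀ C' : Set α, Predecessor φ C' C → x ∈ C' → PrimeIn φ C' x

/-- `A` is a `φ^b`-minimal spanning set of the closed set `C`. -/
def BMinSpanning (φ : Set α → Set α) (C A : Set α) : Prop :=
  φ A = C ∧ ∀ B : Set α, binPart φ B ⊂ binPart φ A → φ B ≠ C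

/-- `C` is join-irreducible: nonempty and whenever it is a join of two closed sets
it equals one of them. -/
def JoinIrred (φ : Set α → Set α) (C : Set α) : Prop :=
  IsClosedSet φ C ∧ C ≠ ∅ ∧
    ∀ C1 C2 : Set α, IsClosedSet φ C1 → IsClosedSet φ C2 →
      C = φ (C1 ∪ C2) → C = C1 ∨ C = C2

/-- `C` is join-irreducible: nonempty with a unique predecessor. -/
def JoinIrredUP (φ : Set α → Set α) (C : Set α) : Prop :=
  IsClosedSet φ C ∧ C ≠ ∅ ∧ ∃! C' : Set α, Predecessor φ C' C

/-- Membership in the closure as a subset sum over `ZMod 2`. -/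
theorem aux_mem_iff {n : ℕ} (f : α → (Fin n → ZMod 2)) (A : Set α) (v : Fin n → ZMod 2) :
    v ∈ Submodule.span (ZMod 2) (f '' A) ↔
      ∃ T : Finset α, (T : Set α) ⊆ A ∧ v = ∑ t ∈ T, f t := by
  constructor
  · intro h
    rw [Finsupp.mem_span_image_iff_linearCombination] at h
    obtain ⟨l, hl, rfl⟩ := h
    refine ⟨l.support, hl, ?_⟩
    rw [Finsupp.linearCombination_apply, Finsupp.sum]
    refine Finset.sum_congr rfl fun t ht => ?_
    have h2 : ∀ c : ZMod 2, c ≠ 0 → c = 1 := by decide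
    rw [h2 (l t) (Finsupp.mem_support_iff.1 ht), one_smul]
  · rintro ⟨T, hT, rfl⟩
    exact Submodule.sum_mem _ fun t ht => Submodule.subset_span ⟨t, hT ht, rfl⟩

theorem aux_binPart (φ : Set α → Set α) (h : ∀ x : α, φ {x} = ({x} : Set α)) (A : Set α) :
    binPart φ A = A := by
  ext y; simp [binPart, h]

theorem aux_self_add {n : ℕ} (v : Fin n → ZMod 2) : v + v = 0 := by
  ext i; exact CharTwo.add_self_eq_zero _

theorem aux_chord (φ : Set α → Set α)
    (hφ : IsClosureOp φ)
    (hsimple : φ ∅ = (∅ : Set α) ∧ ∀ x : α, φ {x} = ({x} : Set α))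
    (hbinary : ∃ (n : ℕ) (f : α → (Fin n → ZMod 2)),
      ∀ X : Set α, φ X = {y : α | f y ∈ Submodule.span (ZMod 2) (f '' X)})
    {x y : α} {A : Set α} (hx : x ∈ φ A) (hmin : ∀ B, B ⊂ A → x ∉ φ B)
    (hy : y ∈ φ A) (hyA : y ∉ A) (hyx : y ≠ x) :
    ∃ A' : Set α, A' ⊆ A ∧ A' ≠ A ∧ (∃ a ∈ A', ∃ b ∈ A', a ≠ b) ∧ y ∈ φ A' ∧
      x ∈ φ (insert y (A \ A')) ∧ ∀ a ∈ A', y ∉ φ (A \ {a}) := by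
  classical
  obtain ⟨n, f, hf⟩ := hbinary
  have key : ∀ X z, z ∈ φ X ↔ ∃ T : Finset α, (T : Set α) ⊆ X ∧ f z = ∑ t ∈ T, f t := by
    intro X z
    rw [hf X]
    exact aux_mem_iff f X (f z)
  have inj : ∀ u v, f u = f v → u = v := by
    intro u v huv
    have : u ∈ φ {v} := (key _ _).2 ⟨{v}, by simp, by simpa using huv⟩
    rw [hsimple.2] at this
    exact this
  have nz : ∀ u, f u ≠ 0 := by
    intro u hu
    have : u ∈ φ ∅ := (key _ _).2 ⟨∅, by simp, by simpa using hu⟩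
    rw [hsimple.1] at this
    exact this
  obtain ⟨S, hSA, hS⟩ := (key _ _).1 hx
  have hSeq : (S : Set α) = A := by
    by_contra hne
    exact hmin S (hSA.ssubset_of_ne hne) ((key _ _).2 ⟨S, subset_rfl, hS⟩)
  obtain ⟨T, hTA, hT⟩ := (key _ _).1 hy
  have hTS : T ⊆ S := by rw [← hSeq] at hTA; exact_mod_cast hTA
  refine ⟨T, hTA, ?_, ?_, (key _ _).2 ⟨T, subset_rfl, hT⟩, ?_, ?_⟩
  · intro h
    rw [← hSeq] at h
    have h' : T = S := by exact_mod_cast h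
    exact hyx (inj _ _ (by rw [hT, hS, h']))
  · by_contra hcon
    push Not at hcon
    rcases T.eq_empty_or_nonempty with h0 | ⟨a, ha⟩
    · subst h0
      exact nz y (by simpa using hT)
    · have : T = {a} := by
        ext b
        simp only [Finset.mem_singleton]
        exact ⟨fun hb => hcon b hb a ha, fun h => h ▸ ha⟩
      rw [this, Finset.sum_singleton] at hT
      exact hyA ((inj _ _ hT) ▸ hTA ha)
  · refine (key _ _).2 ⟨insert y (S \ T), ?_, ?_⟩
    · rw [← hSeq]; push_cast; exact subset_rfl
    · rw [Finset.sum_insert, hS, hT, ← Finset.sum_sdiff hTS, add_comm]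
      intro h
      exact hyA (hSA (Finset.mem_sdiff.1 h).1)
  · intro a ha hya
    have hmem : A \ {a} ⊂ A := by
      refine Set.sdiff_subset.ssubset_of_ne fun h => ?_
      have : a ∈ A \ {a} := h.symm.subset (hTA ha)
      exact this.2 rfl
    have h1 : a ∈ φ (insert y (A \ {a})) := by
      refine (key _ _).2 ⟨insert y (T.erase a), ?_, ?_⟩
      · push_cast
        exact Set.insert_subset_insert (Set.sdiff_subset_sdiff_left hTA)
      · rw [Finset.sum_insert, hT, ← Finset.add_sum_erase _ _ ha, add_assoc, aux_self_add, add_zero]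
        intro h
        exact hyA (hTA (Finset.mem_erase.1 h).2)
    have h2 : insert y (A \ {a}) ⊆ φ (A \ {a}) :=
      Set.insert_subset hya (hφ.1 _)
    have h3 : a ∈ φ (A \ {a}) := by
      have := hφ.2.2 _ _ h2 h1
      rwa [hφ.2.1] at this
    have h4 : A ⊆ φ (A \ {a}) := by
      intro z hz
      by_cases hza : z = a
      · rw [hza]; exact h3
      · exact hφ.1 _ ⟨hz, hza⟩
    have := hφ.2.2 _ _ h4 hx
    rw [hφ.2.1] at this
    exact hmin _ hmem this

theorem aux_exists [Fintype α] (φ : Set α → Set α)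
    (hφ : IsClosureOp φ)
    (hsimple : φ ∅ = (∅ : Set α) ∧ ∀ x : α, φ {x} = ({x} : Set α))
    (hbinary : ∃ (n : ℕ) (f : α → (Fin n → ZMod 2)),
      ∀ X : Set α, φ X = {y : α | f y ∈ Submodule.span (ZMod 2) (f '' X)})
    (P : Set α) (hP : ¬ φ P ⊆ P) :
    ∃ (A : Set α) (x : α), A ⊆ P ∧ x ∉ P ∧ (∀ B, B ⊂ A → x ∉ φ B) ∧ φ A = insert x A := by
  obtain ⟨x0, hx0, hx0P⟩ := Set.not_subset.1 hP
  obtain ⟨A, ⟨hAP, x, hxP, hxA⟩, hmin⟩ := exists_minimalFor_of_wellFoundedLT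
    (fun A : Set α => A ⊆ P ∧ ∃ x, x ∉ P ∧ x ∈ φ A) Set.ncard ⟨P, subset_rfl, x0, hx0P, hx0⟩
  have hm : ∀ B : Set α, B.ncard < A.ncard → B ⊆ P → ∀ z, z ∉ P → z ∉ φ B := by
    intro B hB hBP z hz hzB
    have := hmin (j := B) ⟨hBP, z, hz, hzB⟩ hB.le
    omega
  have hmB : ∀ B, B ⊂ A → x ∉ φ B := fun B hB =>
    hm B (Set.ncard_lt_ncard hB (Set.toFinite _)) (hB.subset.trans hAP) x hxP
  refine ⟨A, x, hAP, hxP, hmB, Set.Subset.antisymm ?_ (Set.insert_subset hxA (hφ.1 _))⟩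
  intro y hy
  by_contra hcon
  rw [Set.mem_insert_iff, not_or] at hcon
  obtain ⟨A', hA', hne, ⟨a, ha, b, hb, hab⟩, hyA', hxD, -⟩ :=
    aux_chord φ hφ hsimple hbinary hxA hmB hy hcon.2 hcon.1
  by_cases hyP : y ∈ P
  · refine hm _ ?_ (Set.insert_subset hyP (Set.sdiff_subset.trans hAP)) x hxP hxD
    have h1 := Set.ncard_insert_le y (A \ A')
    have h2 := Set.ncard_sdiff_add_ncard_of_subset hA' (Set.toFinite _)
    have h3 : 1 < A'.ncard := (Set.one_lt_ncard (Set.toFinite _)).2 ⟨a, ha, b, hb, hab⟩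
    omega
  · exact hm A' (Set.ncard_lt_ncard (hA'.ssubset_of_ne hne) (Set.toFinite _))
      (hA'.trans hAP) y hyP hyA'

theorem aux_isDGen (φ : Set α → Set α) (h : ∀ x : α, φ {x} = ({x} : Set α)) (x : α) (A : Set α) :
    IsDGen φ x A ↔ x ∈ φ A ∧ x ∉ A ∧ ∀ B, B ⊂ A → x ∉ φ B := by
  simp only [IsDGen, aux_binPart φ h]

/-- Closed circuits yield E-generators. -/
theorem aux_isEGen (φ : Set α → Set α)
    (hφ : IsClosureOp φ)
    (hs : ∀ x : α, φ {x} = ({x} : Set α)) {x : α} {A : Set α} (hxA : x ∉ A)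
    (hm : ∀ B, B ⊂ A → x ∉ φ B) (hA : φ A = insert x A) : IsEGen φ x A := by
  refine ⟨(aux_isDGen φ hs x A).2 ⟨hA ▸ Set.mem_insert _ _, hxA, hm⟩, ?_⟩
  intro B hB hBA
  obtain ⟨h1, h2, -⟩ := (aux_isDGen φ hs x B).1 hB
  have hsub : B ⊆ A := by
    intro z hz
    have := hBA (hφ.1 _ hz)
    rw [hA] at this
    rcases this with rfl | h
    · exact absurd hz h2
    · exact h
  by_cases hBe : B = A
  · rw [hBe]
  · exact absurd h1 (hm B (hsub.ssubset_of_ne hBe))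

/-- Closed circuits yield quasi-closed sets. -/
theorem aux_quasi (φ : Set α → Set α) {x : α} {A : Set α}
    (hm : ∀ B, B ⊂ A → x ∉ φ B) (hA : φ A = insert x A) : QuasiClosed φ A := by
  intro X hX hlt z hz
  have hne : X ≠ A := by rintro rfl; exact hlt.ne rfl
  have := hlt.subset hz
  rw [hA] at this
  rcases this with rfl | h
  · exact absurd hz (hm X (hX.ssubset_of_ne hne))
  · exact h

theorem aux_closed [Fintype α] (φ : Set α → Set α)
    (hφ : IsClosureOp φ)
    (hexch : ∀ C : Set α, IsClosedSet φ C → ∀ x y : α, x ∉ C → y ∉ C →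
      x ∈ φ (C ∪ {y}) → y ∈ φ (C ∪ {x}))
    (hsimple : φ ∅ = (∅ : Set α) ∧ ∀ x : α, φ {x} = ({x} : Set α))
    (hbinary : ∃ (n : ℕ) (f : α → (Fin n → ZMod 2)),
      ∀ X : Set α, φ X = {y : α | f y ∈ Submodule.span (ZMod 2) (f '' X)})
    {x : α} {A : Set α} (hE : IsEGen φ x A) : φ A = insert x A := by
  obtain ⟨hD, hEm⟩ := hE
  obtain ⟨hxA, hxnA, hmB⟩ := (aux_isDGen φ hsimple.2 x A).1 hD
  refine Set.Subset.antisymm ?_ (Set.insert_subset hxA (hφ.1 _))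
  intro y hy
  by_contra hcon
  rw [Set.mem_insert_iff, not_or] at hcon
  obtain ⟨A', hA', hne, ⟨a, ha, b, hb, hab⟩, hyA', hxD, hlast⟩ :=
    aux_chord φ hφ hsimple hbinary hxA hmB hy hcon.2 hcon.1
  obtain ⟨B, hBD, hBmin⟩ := exists_minimal_le_of_wellFoundedLT
    (fun B : Set α => x ∈ φ B) (insert y (A \ A')) hxD
  have hBgen : IsDGen φ x B := by
    refine (aux_isDGen φ hsimple.2 x B).2 ⟨hBmin.prop, ?_, ?_⟩
    · intro h
      rcases hBD h with h | h
      · exact hcon.1 h.symm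
      · exact hxnA h.1
    · intro B' hB' h
      exact hB'.2 (hBmin.le_of_le h hB'.1)
  have hDA : φ (insert y (A \ A')) ⊆ φ A := by
    have := hφ.2.2 _ _ (Set.insert_subset hy (Set.sdiff_subset.trans (hφ.1 A)) :
      insert y (A \ A') ⊆ φ A)
    rwa [hφ.2.1] at this
  have hBA := hEm B hBgen ((hφ.2.2 _ _ hBD).trans hDA)
  have haD : a ∈ φ (insert y (A \ A')) := by
    apply hφ.2.2 _ _ hBD
    show a ∈ φ B
    rw [hBA]
    exact hφ.1 _ (hA' ha)
  have hCb : φ (A \ {a, b}) ⊆ φ (A \ {b}) :=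
    hφ.2.2 _ _ (Set.sdiff_subset_sdiff_right (by simp))
  have hCa : φ (A \ {a, b}) ⊆ φ (A \ {a}) :=
    hφ.2.2 _ _ (Set.sdiff_subset_sdiff_right (by simp))
  have hyC : y ∉ φ (A \ {a, b}) := fun h => hlast b hb (hCb h)
  have haC : a ∉ φ (A \ {a, b}) := by
    intro h
    have h3 := hCa h
    have h4 : A ⊆ φ (A \ {a}) := by
      intro z hz
      by_cases hza : z = a
      · rw [hza]; exact h3
      · exact hφ.1 _ ⟨hz, hza⟩
    have h5 := hφ.2.2 _ _ h4 hy
    rw [hφ.2.1] at h5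
    exact hlast a ha h5
  have h6 : a ∈ φ (φ (A \ {a, b}) ∪ {y}) := by
    refine hφ.2.2 _ _ ?_ haD
    refine Set.insert_subset (Or.inr (Set.mem_singleton y)) ?_
    intro z hz
    refine Or.inl (hφ.1 _ ⟨hz.1, ?_⟩)
    rintro (h | h)
    · exact hz.2 (h ▸ ha)
    · rw [Set.mem_singleton_iff] at h
      exact hz.2 (h ▸ hb)
  have h7 := hexch _ (hφ.2.1 _) a y haC hyC h6
  have h8 : φ (A \ {a, b}) ∪ {a} ⊆ φ (A \ {b}) := by
    apply Set.union_subset hCb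
    rw [Set.singleton_subset_iff]
    exact hφ.1 _ ⟨hA' ha, hab⟩
  have h9 := hφ.2.2 _ _ h8 h7
  rw [hφ.2.1] at h9
  exact hlast b hb h9

/-- for the closure space of a finite simple binary matroid, the
canonical base and the E-base coincide; in particular the E-base is valid. -/
theorem statement18 {α : Type*} [Fintype α] (φ : Set α → Set α)
    (hφ : IsClosureOp φ)
    (hexch : ∀ C : Set α, IsClosedSet φ C → ∀ x y : α, x ∉ C → y ∉ C →
      x ∈ φ (C ∪ {y}) → y ∈ φ (C ∪ {x}))
    (hsimple : φ ∅ = (∅ : Set α) ∧ ∀ x : α, φ {x} = ({x} : Set α))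
    (hbinary : ∃ (n : ℕ) (f : α → (Fin n → ZMod 2)),
      ∀ X : Set α, φ X = {y : α | f y ∈ Submodule.span (ZMod 2) (f '' X)}) :
    DGBase φ = EBase φ ∧ EBaseValid φ := by
  have hid : ∀ {x : α} {A : Set α}, x ∉ A → φ A = insert x A → φ A \ A = {x} := by
    intro x A hx h
    rw [h]
    ext z
    simp only [Set.mem_sdiff, Set.mem_insert_iff, Set.mem_singleton_iff]
    constructor
    · tauto
    · rintro rfl; exact ⟨Or.inl rfl, hx⟩
  refine ⟨Set.Subset.antisymm ?_ ?_, ?_⟩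
  · rintro p ⟨P, ⟨hnc, hq, hmin⟩, rfl⟩
    have hns : ¬ φ P ⊆ P := fun h => hnc (h.antisymm (hφ.1 _))
    obtain ⟨A, x, hAP, hxP, hm, hA⟩ := aux_exists φ hφ hsimple hbinary P hns
    have heq : φ A = φ P := by
      by_contra hne
      have := hq A hAP ((hφ.2.2 _ _ hAP).ssubset_of_ne hne)
      exact hxP (this (hA ▸ Set.mem_insert _ _))
    have hAeq : A = P := hmin A (aux_quasi φ hm hA) heq hAP
    subst hAeq
    exact Or.inr ⟨x, A, by rw [hid hxP hA], aux_isEGen φ hφ hsimple.2 hxP hm hA⟩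
  · rintro p (⟨a, x, rfl, hx, hne⟩ | ⟨x, A, rfl, hE⟩)
    · rw [hsimple.2] at hx
      exact absurd hx hne
    · have hA := aux_closed φ hφ hexch hsimple hbinary hE
      obtain ⟨hxA, hxnA, hm⟩ := (aux_isDGen φ hsimple.2 x A).1 hE.1
      refine ⟨A, ⟨?_, aux_quasi φ hm hA, ?_⟩, by rw [hid hxnA hA]⟩
      · intro h
        unfold IsClosedSet at h
        rw [h] at hxA
        exact hxnA hxA
      · intro Q _ hQ hQA
        by_contra hne
        exact hm Q (hQA.ssubset_of_ne hne) (hQ ▸ hxA)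
  · intro Z
    apply Set.Subset.antisymm
    · apply Set.sInter_subset_of_mem
      refine ⟨hφ.1 Z, ?_⟩
      rintro p (⟨a, x, rfl, hx, hne⟩ | ⟨x, A, rfl, hE⟩) hp
      · rw [hsimple.2] at hx
        exact absurd hx hne
      · have h1 := hφ.2.2 _ _ hp hE.1.1
        rw [hφ.2.1] at h1
        exact Set.singleton_subset_iff.2 h1
    · apply Set.subset_sInter
      rintro Y ⟨hZY, hY⟩
      refine (hφ.2.2 _ _ hZY).trans ?_
      by_contra hns
      obtain ⟨A, x, hAP, hxP, hm, hA⟩ := aux_exists φ hφ hsimple hbinary Y hns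
      have hE := aux_isEGen φ hφ hsimple.2 (fun h => hxP (hAP h)) hm hA
      exact hxP (hY (A, {x}) (Or.inr ⟨x, A, rfl, hE⟩) hAP rfl)

end EBaseFormal
end

section
/- Let (U, φ) be a finite standard closure space with geometric closure lattice such that U itself is essential and all essential closed sets other than U are pairwise incomparable under inclusion. Let A be the set of elements of U that are almost prime in the closure lattice of (U, φ), assumed nonempty, and let b be the common size of the bases of the associated matroid (the minimal spanning sets of U). Then there exists a base B* with |B* ∩ A| = min{b, |A|}. -/
namespace EBaseFormal

open Set

variable {α : Type*}

lemma phi_empty {φ : Set α → Set α} (hstd : IsStandard φ) (hat : Atomistic φ) (x : α) :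
    φ ∅ = ∅ := by
  have h := hstd x
  rw [hat x] at h
  simpa [IsClosedSet] using h

lemma exchange {φ : Set α → Set α} (hφ : IsClosureOp φ) (hstd : IsStandard φ)
    (hgeo : Geometric φ) (X : Set α) (y z : α) (hy : y ∈ φ (insert z X)) (hyX : y ∉ φ X) :
    z ∈ φ (insert y X) := by
  obtain ⟨h1, h2, h3⟩ := hφ
  obtain ⟨hat, hus⟩ := hgeo
  have he := phi_empty hstd hat z
  have hz : z ∉ φ X := by
    intro hz
    apply hyX
    rw [← h2 X]
    exact h3 _ _ (Set.insert_subset hz (h1 X)) hy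
  have hi : ({z} : Set α) ∩ φ X = ∅ := by
    ext w
    simp only [Set.mem_inter_iff, Set.mem_singleton_iff, Set.mem_empty_iff_false, iff_false]
    rintro ⟨rfl, hw⟩
    exact hz hw
  have hp := hus {z} (φ X) (hat z) (h2 X) (by
    rw [hi]
    refine ⟨he, hat z, ?_, ?_⟩
    · exact Set.empty_ssubset_singleton
    · intro C _ hC hCz
      exact (Set.subset_singleton_iff_eq.1 hCz).resolve_left hC.ne')
  obtain ⟨_, _, _, hmax⟩ := hp
  have hsub : φ X ⊆ φ (insert y X) := h3 _ _ (Set.subset_insert _ _)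
  have key := hmax (φ (insert y X)) (h2 _)
    ⟨hsub, fun h => hyX (h (h1 _ (Set.mem_insert _ _)))⟩ (by
      rw [← h2 ({z} ∪ φ X)]
      apply h3
      refine Set.insert_subset ?_ ?_
      · refine h3 _ _ ?_ hy
        exact Set.insert_subset (Or.inl rfl) ((h1 X).trans Set.subset_union_right)
      · exact ((h1 X).trans Set.subset_union_right).trans (h1 _))
  rw [key]
  exact h1 _ (Or.inl rfl)

lemma prime_mem [Fintype α] {φ : Set α → Set α} (hφ : IsClosureOp φ) (hstd : IsStandard φ)
    (hat : Atomistic φ) (H : Set α) (hH : IsClosedSet φ H) (x : α) (hx : PrimeIn φ H x)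
    (J : Set α) : J ⊆ H → x ∈ φ J → x ∈ J := by
  obtain ⟨h1, h2, h3⟩ := hφ
  induction J, Set.toFinite J using Set.Finite.induction_on with
  | empty =>
    intro _ h
    rwa [phi_empty hstd hat x] at h
  | @insert j J _ _ ih =>
    intro hJ h
    have hJ' : J ⊆ H := (Set.subset_insert _ _).trans hJ
    have hp := hx {j} (φ J) (hat j) (h2 J)
      (Set.singleton_subset_iff.2 (hJ (Set.mem_insert _ _)))
      ((h3 _ _ hJ').trans hH.le) (by
        rw [hat x, Set.singleton_subset_iff]
        exact h3 _ _ (Set.insert_subset (Or.inl rfl) ((h1 J).trans Set.subset_union_right)) h)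
    rw [hat x, Set.singleton_subset_iff, Set.singleton_subset_iff] at hp
    rcases hp with hp | hp
    · exact Or.inl hp
    · exact Or.inr (ih hJ' hp)

lemma almost_span [Fintype α] {φ : Set α → Set α} (hφ : IsClosureOp φ) (hstd : IsStandard φ)
    (hat : Atomistic φ) (x : α) (hx : AlmostPrimeIn φ Set.univ x)
    (J : Set α) (hxJ : x ∉ J) (h : x ∈ φ J) : φ J = Set.univ := by
  by_contra hne
  obtain ⟨h1, h2, h3⟩ := id hφ
  obtain ⟨H, hJH, hmax⟩ := Set.Finite.exists_le_maximal
    (s := {C : Set α | IsClosedSet φ C ∧ C ≠ Set.univ}) (Set.toFinite _)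
    (a := φ J) ⟨h2 J, hne⟩
  have hpred : Predecessor φ H Set.univ := by
    refine ⟨hmax.prop.1, Set.univ_subset_iff.1 (h1 _), Set.ssubset_univ_iff.2 hmax.prop.2, ?_⟩
    intro C hC hHC _
    by_contra hCu
    exact hHC.2 (hmax.2 ⟨hC, hCu⟩ hHC.1)
  exact hxJ (prime_mem hφ hstd hat H hmax.prop.1 x (hx.2.2 H hpred (hJH h)) J
    ((h1 J).trans hJH) h)

/-- in a geometric closure space where `U` is essential, all other
essential sets are pairwise incomparable, the set `A` of almost prime elements is
nonempty, and all bases have size `b`, there is a base `B*` with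
`|B* ∩ A| = min b |A|`. -/
theorem statement19 {α : Type*} [Fintype α] (φ : Set α → Set α)
    (hφ : IsClosureOp φ) (hstd : IsStandard φ) (hgeo : Geometric φ)
    (hUess : Essential φ (Set.univ : Set α))
    (hinc : ∀ C1 C2 : Set α, Essential φ C1 → Essential φ C2 →
      C1 ≠ Set.univ → C2 ≠ Set.univ → C1 ⊆ C2 → C1 = C2)
    (hA : {x : α | AlmostPrimeIn φ Set.univ x}.Nonempty)
    (b : ℕ)
    (hb : ∀ B : Set α,
      (φ B = Set.univ ∧ ∀ B' ⊆ B, φ B' = Set.univ → B' = B) → B.ncard = b) :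
    ∃ B : Set α, (φ B = Set.univ ∧ ∀ B' ⊆ B, φ B' = Set.univ → B' = B) ∧
      (B ∩ {x : α | AlmostPrimeIn φ Set.univ x}).ncard =
        min b {x : α | AlmostPrimeIn φ Set.univ x}.ncard := by
  classical
  obtain ⟨h1, h2, h3⟩ := id hφ
  set A := {x : α | AlmostPrimeIn φ Set.univ x} with hAdef
  by_cases hdep : ∃ x ∈ A, x ∈ φ (A \ {x})
  · obtain ⟨x, hxA, hx⟩ := hdep
    have hsp := almost_span hφ hstd hgeo.1 x hxA (A \ {x}) (by simp) hx
    obtain ⟨B, hBA, hmin⟩ := Set.Finite.exists_le_minimal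
      (s := {C : Set α | φ C = Set.univ}) (Set.toFinite _) (a := A \ {x}) hsp
    have hbase : φ B = Set.univ ∧ ∀ B' ⊆ B, φ B' = Set.univ → B' = B :=
      ⟨hmin.prop, fun B' hB' hs => Set.Subset.antisymm hB' (hmin.2 hs hB')⟩
    have hBA' : B ⊆ A := hBA.trans Set.diff_subset
    refine ⟨B, hbase, ?_⟩
    have hle := Set.ncard_le_ncard hBA' (Set.toFinite _)
    rw [Set.inter_eq_left.2 hBA', hb B hbase] at *
    exact (min_eq_left hle).symm
  · push Not at hdep
    obtain ⟨B, hAB, hmax⟩ := Set.Finite.exists_le_maximal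
      (s := {C : Set α | ∀ x ∈ C, x ∉ φ (C \ {x})}) (Set.toFinite _) (a := A) hdep
    have hind : ∀ x ∈ B, x ∉ φ (B \ {x}) := hmax.prop
    have hspan : φ B = Set.univ := by
      by_contra hne
      obtain ⟨y, hy⟩ := (Set.ne_univ_iff_exists_notMem _).1 hne
      have hyB : y ∉ B := fun h => hy (h1 _ h)
      refine hyB (hmax.2 (y := insert y B) ?_ (Set.subset_insert _ _) (Set.mem_insert _ _))
      rintro x hx hxc
      by_cases hxy : x = y
      · subst hxy
        exact hy (h3 _ _ (by simp) hxc)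
      · have hxB : x ∈ B := hx.resolve_left hxy
        have hsub : insert y B \ {x} ⊆ insert y (B \ {x}) := by
          rintro w ⟨rfl | hw, hw2⟩
          · exact Or.inl rfl
          · exact Or.inr ⟨hw, hw2⟩
        have := exchange hφ hstd hgeo (B \ {x}) x y (h3 _ _ hsub hxc) (hind x hxB)
        exact hy (h3 _ _ (Set.insert_subset hxB Set.diff_subset) this)
    have hbase : φ B = Set.univ ∧ ∀ B' ⊆ B, φ B' = Set.univ → B' = B := by
      refine ⟨hspan, fun B' hB' hs => Set.Subset.antisymm hB' ?_⟩
      intro x hx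
      by_contra hxB'
      refine hind x hx (h3 B' _ ?_ (hs ▸ Set.mem_univ x))
      intro w hw
      exact ⟨hB' hw, fun h => hxB' (by rw [Set.mem_singleton_iff] at h; exact h ▸ hw)⟩
    refine ⟨B, hbase, ?_⟩
    have hle := Set.ncard_le_ncard hAB (Set.toFinite _)
    rw [hb B hbase] at hle
    rw [Set.inter_eq_right.2 hAB]
    exact (min_eq_right hle).symm

end EBaseFormal
end
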